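/- arXiv:0802.0933 — 5 statements merged into one kernel-verified Lean document; each statement's English description precedes it below -/
import Mathlib

section
/- For all ζ, h ∈ ℝ with ζ ≠ 0 and ζ h ≥ 0, one has φ_k(ζ + h) − φ_k(ζ) − φ_k′(ζ) h ≤ k^{−1} h² ρ(|ζ|)^{−2}. -/
/-!
Let `F` be the second primitive of `ψ` with `F 0 = F' 0 = 0`, so that `φ = F ∘ |·|`. When `ζ` and
`h` have the same sign, `|ζ + h| = |ζ| + |h|`, so the first-order Taylor remainder of `φ` at `ζ`
with increment `h` is that of `F` at `|ζ|` with increment `|h|`. The latter is the double integral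
of `ψ z` over `|ζ| ≤ z ≤ y ≤ |ζ| + |h|`, a triangle of area `h² / 2` on which
`ψ ≤ (2 / k) ρ(|ζ|)⁻²` because `ρ` is non-decreasing.
-/

open MeasureTheory Set Filter

section SameSign

variable {R : Type*} [Ring R] [LinearOrder R] [IsStrictOrderedRing R] {x h : R}

lemma abs_add_of_mul_nonneg (hxh : 0 ≤ x * h) : |x + h| = |x| + |h| :=
  (abs_add_eq_add_abs_iff x h).2 (mul_nonneg_iff.1 hxh)

lemma mul_sign_eq_abs_of_mul_nonneg (hx : x ≠ 0) (hxh : 0 ≤ x * h) :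
    h * SignType.sign x = |h| := by
  rcases hx.lt_or_gt with hx_neg | hx_pos
  · simp [sign_neg hx_neg, abs_of_nonpos (nonpos_of_mul_nonneg_right hxh hx_neg)]
  · simp [sign_pos hx_pos, abs_of_nonneg (nonneg_of_mul_nonneg_right hxh hx_pos)]

end SameSign

section VectorValued

variable {E : Type*} [NormedAddCommGroup E] [NormedSpace ℝ E]

/-- The first-order Taylor remainder of `f` at `x` with increment `h`, written `D_h f(x)` in the
statement of `stmt4`. Where `f` is not differentiable at `x`, `deriv f x` is `0`. -/
noncomputable def firstOrderRemainder (f : ℝ → E) (x h : ℝ) : E :=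
  f (x + h) - f x - h • deriv f x

lemma firstOrderRemainder_comp_abs {F : ℝ → E} {x h : ℝ} (hF : DifferentiableAt ℝ F |x|)
    (hx : x ≠ 0) (hxh : 0 ≤ x * h) :
    firstOrderRemainder (fun y ↦ F |y|) x h = firstOrderRemainder F |x| |h| := by
  have hderiv : deriv (fun y ↦ F |y|) x = (SignType.sign x : ℝ) • deriv F |x| :=
    (hF.hasDerivAt.scomp x (hasDerivAt_abs hx)).deriv
  simp only [firstOrderRemainder, hderiv, smul_smul, abs_add_of_mul_nonneg hxh,
    mul_sign_eq_abs_of_mul_nonneg hx hxh]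

/-- The second primitive of `ψ` that vanishes at `0` together with its derivative; the function
`φ_k` is its composition with the absolute value. -/
noncomputable def secondPrimitive (ψ : ℝ → E) (x : ℝ) : E :=
  ∫ y in (0 : ℝ)..x, ∫ z in (0 : ℝ)..y, ψ z

lemma hasDerivAt_secondPrimitive [CompleteSpace E] {ψ : ℝ → E}
    (hψ : ∀ a b, IntervalIntegrable ψ volume a b) (x : ℝ) :
    HasDerivAt (secondPrimitive ψ) (∫ z in (0 : ℝ)..x, ψ z) x :=
  ((intervalIntegral.continuous_primitive hψ 0).integral_hasStrictDerivAt 0 x).hasDerivAt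

lemma firstOrderRemainder_secondPrimitive [CompleteSpace E] {ψ : ℝ → E}
    (hψ : ∀ a b, IntervalIntegrable ψ volume a b) (x h : ℝ) :
    firstOrderRemainder (secondPrimitive ψ) x h = ∫ y in x..x + h, ∫ z in x..y, ψ z := by
  have hG (a b : ℝ) : IntervalIntegrable (fun y ↦ ∫ z in (0 : ℝ)..y, ψ z) volume a b :=
    (intervalIntegral.continuous_primitive hψ 0).intervalIntegrable a b
  calc firstOrderRemainder (secondPrimitive ψ) x h
      = (∫ y in x..x + h, ∫ z in (0 : ℝ)..y, ψ z) - ∫ _ in x..x + h, ∫ z in (0 : ℝ)..x, ψ z := by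
        rw [firstOrderRemainder, (hasDerivAt_secondPrimitive hψ x).deriv, secondPrimitive,
          secondPrimitive, intervalIntegral.integral_interval_sub_left (hG _ _) (hG _ _),
          intervalIntegral.integral_const, add_sub_cancel_left]
    _ = ∫ y in x..x + h, ((∫ z in (0 : ℝ)..y, ψ z) - ∫ z in (0 : ℝ)..x, ψ z) :=
        (intervalIntegral.integral_sub (hG _ _) intervalIntegrable_const).symm
    _ = ∫ y in x..x + h, ∫ z in x..y, ψ z := by
        simp only [intervalIntegral.integral_interval_sub_left (hψ _ _) (hψ _ _)]

end VectorValued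

lemma firstOrderRemainder_secondPrimitive_le {ψ : ℝ → ℝ}
    (hψ : ∀ a b, IntervalIntegrable ψ volume a b) {x h C : ℝ} (hh : 0 ≤ h)
    (hψC : ∀ z ∈ Icc x (x + h), ψ z ≤ C) :
    firstOrderRemainder (secondPrimitive ψ) x h ≤ C / 2 * h ^ 2 := by
  have inner_le (y : ℝ) (hy : y ∈ Icc x (x + h)) : ∫ z in x..y, ψ z ≤ C * (y - x) :=
    calc ∫ z in x..y, ψ z ≤ ∫ _ in x..y, C :=
          intervalIntegral.integral_mono_on hy.1 (hψ x y) intervalIntegrable_const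
            fun z hz ↦ hψC z ⟨hz.1, hz.2.trans hy.2⟩
      _ = C * (y - x) := by rw [intervalIntegral.integral_const, smul_eq_mul, mul_comm]
  calc firstOrderRemainder (secondPrimitive ψ) x h
      = ∫ y in x..x + h, ∫ z in x..y, ψ z := firstOrderRemainder_secondPrimitive hψ x h
    _ ≤ ∫ y in x..x + h, C * (y - x) :=
        intervalIntegral.integral_mono_on (le_add_of_nonneg_right hh)
          ((intervalIntegral.continuous_primitive hψ x).intervalIntegrable _ _)
          (Continuous.intervalIntegrable (by fun_prop) _ _) inner_le
    _ = C / 2 * h ^ 2 := by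
        rw [intervalIntegral.integral_const_mul,
          intervalIntegral.integral_comp_sub_right (fun y ↦ y), integral_id]
        ring

theorem stmt4_general {k : ℝ} (hk : 0 < k) {ψ : ℝ → ℝ}
    (hψ : ∀ a b, IntervalIntegrable ψ volume a b)
    {φ : ℝ → ℝ} (hφ : ∀ x, φ x = ∫ y in (0 : ℝ)..|x|, ∫ z in (0 : ℝ)..y, ψ z)
    {ρ : ℝ → ℝ} (hρ_mono : MonotoneOn ρ (Ioi 0)) (hρ_pos : ∀ z, 0 < z → 0 < ρ z)
    (hψρ : ∀ z, 0 < z → ψ z ≤ (2 / k) * ((ρ z) ^ 2)⁻¹) {ζ h : ℝ} (hζ : ζ ≠ 0) (hζh : 0 ≤ ζ * h) :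
    φ (ζ + h) - φ ζ - deriv φ ζ * h ≤ k⁻¹ * h ^ 2 * ((ρ |ζ|) ^ 2)⁻¹ := by
  obtain rfl : φ = fun x ↦ secondPrimitive ψ |x| := funext hφ
  have hζ_pos : 0 < |ζ| := abs_pos.2 hζ
  have hψ_le (z : ℝ) (hz : |ζ| ≤ z) : ψ z ≤ (2 / k) * ((ρ |ζ|) ^ 2)⁻¹ := by
    have hz_pos : 0 < z := hζ_pos.trans_le hz
    have hρ_le : ρ |ζ| ≤ ρ z := hρ_mono hζ_pos hz_pos hz
    have hρζ_pos : 0 < ρ |ζ| := hρ_pos _ hζ_pos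
    exact (hψρ z hz_pos).trans (by gcongr)
  calc _ = firstOrderRemainder (fun x ↦ secondPrimitive ψ |x|) ζ h := by
        rw [firstOrderRemainder, smul_eq_mul, mul_comm h]
    _ = firstOrderRemainder (secondPrimitive ψ) |ζ| |h| :=
        firstOrderRemainder_comp_abs (hasDerivAt_secondPrimitive hψ _).differentiableAt hζ hζh
    _ ≤ (2 / k) * ((ρ |ζ|) ^ 2)⁻¹ / 2 * |h| ^ 2 :=
        firstOrderRemainder_secondPrimitive_le hψ (abs_nonneg h) fun z hz ↦ hψ_le z hz.1
    _ = k⁻¹ * h ^ 2 * ((ρ |ζ|) ^ 2)⁻¹ := by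
        rw [sq_abs]
        ring

/-- If `ζ ≠ 0` and `ζ h ≥ 0`, then `D_h φ_k(ζ) ≤ k⁻¹ h² ρ(|ζ|)⁻²`. -/
theorem stmt4 (k : ℕ) (hk : 1 ≤ k) (ak akm1 : ℝ)
    (hak : 0 < ak) (haka : ak < akm1) (hakm1 : akm1 ≤ 1)
    (ψ : ℝ → ℝ) (hψ_cont : Continuous ψ) (hψ_nonneg : ∀ z, 0 ≤ ψ z)
    (hψ_supp : ∀ z, z ∉ Ioo ak akm1 → ψ z = 0)
    (hψ_int : (∫ z, ψ z) = 1)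
    (φ : ℝ → ℝ) (hφ : ∀ x, φ x = ∫ y in (0:ℝ)..|x|, ∫ z in (0:ℝ)..y, ψ z)
    (ρ : ℝ → ℝ) (hρ_nonneg : ∀ z, 0 ≤ z → 0 ≤ ρ z)
    (hρ_mono : MonotoneOn ρ (Ici 0)) (hρ_pos : ∀ z, 0 < z → 0 < ρ z)
    (hψρ : ∀ z ∈ Ioo ak akm1, ψ z ≤ (2 / k) * ((ρ z) ^ 2)⁻¹) :
    ∀ ζ h : ℝ, ζ ≠ 0 → 0 ≤ ζ * h →
      φ (ζ + h) - φ ζ - deriv φ ζ * h ≤ (k : ℝ)⁻¹ * h ^ 2 * ((ρ |ζ|) ^ 2)⁻¹ := fun _ _ ↦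
  stmt4_general (Nat.cast_pos.2 hk) (fun _ _ ↦ hψ_cont.intervalIntegrable _ _) hφ
    (hρ_mono.mono Ioi_subset_Ici_self) hρ_pos fun z _ ↦
      (em (z ∈ Ioo ak akm1)).elim (hψρ z) fun hz ↦ (hψ_supp z hz).trans_le (by positivity)
end

section
/- For all ζ, h ∈ ℝ with ζ h ≥ 0, one has 0 ≤ φ_k(ζ + h) − φ_k(ζ) − φ_k′(ζ) h ≤ φ_k(ζ + h) − φ_k(ζ) ≤ |h|. -/
open MeasureTheory Set Filter

/-!
Since `ψ` is only integrated over `[0, ∞)`, it may be replaced by its even extension `z ↦ ψ |z|`.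
The primitive `D x = ∫ z in 0..x, ψ |z|` is odd, so its own primitive is even, which removes the
absolute value from the definition of `φ`: `φ x = ∫ y in 0..x, D y` for every real `x`. Thus
`φ' = D` everywhere, including at `0`. As `D` is monotone, `φ` is convex and lies above its
tangents; as moreover `D 0 = 0`, `D ζ` has the sign of `ζ`, so `D ζ * h ≥ 0`; and `φ` is Lipschitz
because `|D|` is bounded by the mass of `ψ` on the half-line.
-/

section Parity

lemma even_apply_abs {α β : Type*} [AddGroup α] [LinearOrder α] {f : α → β}
    (hf : Function.Even f) (x : α) : f |x| = f x := by
  rcases abs_choice x with h | h <;> simp only [h, hf.eq]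

variable {E : Type*} [NormedAddCommGroup E] [NormedSpace ℝ E] {f : ℝ → E}

lemma odd_primitive_of_even (hf : Function.Even f) :
    Function.Odd fun x ↦ ∫ t in (0 : ℝ)..x, f t := fun x ↦
  calc ∫ t in (0 : ℝ)..-x, f t = ∫ t in (0 : ℝ)..-x, f (-t) := by simp only [hf.eq]
    _ = ∫ t in x..0, f t := by rw [intervalIntegral.integral_comp_neg, neg_neg, neg_zero]
    _ = -∫ t in (0 : ℝ)..x, f t := intervalIntegral.integral_symm 0 x

lemma even_primitive_of_odd (hf : Function.Odd f) :
    Function.Even fun x ↦ ∫ t in (0 : ℝ)..x, f t := fun x ↦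
  calc ∫ t in (0 : ℝ)..-x, f t = -∫ t in (0 : ℝ)..-x, f (-t) := by
        simp only [hf.eq, intervalIntegral.integral_neg, neg_neg]
    _ = -∫ t in x..0, f t := by rw [intervalIntegral.integral_comp_neg, neg_neg, neg_zero]
    _ = ∫ t in (0 : ℝ)..x, f t := (intervalIntegral.integral_symm x 0).symm

end Parity

lemma monotone_primitive {μ : Measure ℝ} {f : ℝ → ℝ} (hf : ∀ a b, IntervalIntegrable f μ a b)
    (hf_nonneg : 0 ≤ᵐ[μ] f) (a : ℝ) : Monotone fun x ↦ ∫ t in a..x, f t ∂μ := fun x y hxy ↦ by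
  have hdiff : (∫ t in a..y, f t ∂μ) - ∫ t in a..x, f t ∂μ = ∫ t in x..y, f t ∂μ :=
    intervalIntegral.integral_interval_sub_left (hf a y) (hf a x)
  rw [← sub_nonneg, hdiff]
  exact intervalIntegral.integral_nonneg_of_ae hxy hf_nonneg

lemma mul_nonneg_of_monotone_of_map_zero {R : Type*} [Ring R] [LinearOrder R]
    [IsStrictOrderedRing R] {f : R → R} (hf : Monotone f) (hf_zero : f 0 = 0) {x y : R}
    (hxy : 0 ≤ x * y) : 0 ≤ f x * y := by
  rcases mul_nonneg_iff.1 hxy with ⟨hx, hy⟩ | ⟨hx, hy⟩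
  · exact mul_nonneg (hf_zero ▸ hf hx) hy
  · exact mul_nonneg_of_nonpos_of_nonpos (hf_zero ▸ hf hx) hy

lemma deriv_mul_sub_le_sub_of_convexOn {S : Set ℝ} {f : ℝ → ℝ} {f' x y : ℝ}
    (hf : ConvexOn ℝ S f) (hx : x ∈ S) (hy : y ∈ S) (hf' : HasDerivAt f f' x) :
    f' * (y - x) ≤ f y - f x := by
  rcases lt_trichotomy x y with hxy | rfl | hyx
  · have hslope := hf.le_slope_of_hasDerivAt hx hy hxy hf'
    rwa [slope_def_field, le_div_iff₀ (sub_pos.2 hxy)] at hslope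
  · simp only [sub_self, mul_zero, le_refl]
  · have hslope := hf.slope_le_of_hasDerivAt hy hx hyx hf'
    rw [slope_def_field, div_le_iff₀ (sub_pos.2 hyx)] at hslope
    linarith

/-- The primitive, vanishing at `0`, of the even extension `z ↦ ψ |z|` of `ψ` from `[0, ∞)` to `ℝ`.
It is the derivative of `x ↦ ∫ y in 0..|x|, ∫ z in 0..y, ψ z`. -/
noncomputable def evenExtPrimitive (ψ : ℝ → ℝ) (x : ℝ) : ℝ :=
  ∫ z in (0 : ℝ)..x, ψ |z|

namespace evenExtPrimitive

variable {ψ : ℝ → ℝ}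

lemma odd : Function.Odd (evenExtPrimitive ψ) :=
  odd_primitive_of_even fun z ↦ by rw [abs_neg]

lemma eq_of_nonneg {x : ℝ} (hx : 0 ≤ x) :
    evenExtPrimitive ψ x = ∫ z in (0 : ℝ)..x, ψ z :=
  intervalIntegral.integral_congr fun z hz ↦ by
    rw [uIcc_of_le hx] at hz
    simp only [abs_of_nonneg hz.1]

lemma integral_primitive_abs (x : ℝ) :
    ∫ y in (0 : ℝ)..|x|, ∫ z in (0 : ℝ)..y, ψ z = ∫ y in (0 : ℝ)..x, evenExtPrimitive ψ y :=
  calc ∫ y in (0 : ℝ)..|x|, ∫ z in (0 : ℝ)..y, ψ z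
      = ∫ y in (0 : ℝ)..|x|, evenExtPrimitive ψ y :=
        intervalIntegral.integral_congr fun y hy ↦ by
          rw [uIcc_of_le (abs_nonneg x)] at hy
          exact (eq_of_nonneg hy.1).symm
    _ = ∫ y in (0 : ℝ)..x, evenExtPrimitive ψ y := even_apply_abs (even_primitive_of_odd odd) x

lemma intervalIntegrable_comp_abs (hψ : ∀ x, 0 < x → IntervalIntegrable ψ volume 0 x) (a b : ℝ) :
    IntervalIntegrable (fun z ↦ ψ |z|) volume a b :=
  intervalIntegrable_of_even (fun z ↦ by rw [abs_neg]) fun x hx ↦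
    (hψ x hx).congr fun z hz ↦ by
      rw [uIoc_of_le hx.le] at hz
      simp only [abs_of_pos hz.1]

lemma continuous (hψ : ∀ x, 0 < x → IntervalIntegrable ψ volume 0 x) :
    Continuous (evenExtPrimitive ψ) :=
  intervalIntegral.continuous_primitive (intervalIntegrable_comp_abs hψ) 0

lemma hasDerivAt_integral_primitive_abs (hψ : ∀ x, 0 < x → IntervalIntegrable ψ volume 0 x)
    (x : ℝ) :
    HasDerivAt (fun x ↦ ∫ y in (0 : ℝ)..|x|, ∫ z in (0 : ℝ)..y, ψ z) (evenExtPrimitive ψ x) x := by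
  simp only [integral_primitive_abs]
  exact ((continuous hψ).integral_hasStrictDerivAt 0 x).hasDerivAt

lemma monotone (hψ : ∀ x, 0 < x → IntervalIntegrable ψ volume 0 x)
    (hψ_nonneg : ∀ z, 0 ≤ z → 0 ≤ ψ z) : Monotone (evenExtPrimitive ψ) :=
  monotone_primitive (intervalIntegrable_comp_abs hψ)
    (.of_forall fun z ↦ hψ_nonneg |z| (abs_nonneg z)) 0

lemma abs_le_integral_Ioi (hψ : IntegrableOn ψ (Ioi 0)) (hψ_nonneg : ∀ z, 0 ≤ z → 0 ≤ ψ z)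
    (x : ℝ) : |evenExtPrimitive ψ x| ≤ ∫ z in Ioi 0, ψ z := by
  have habs_even : Function.Even fun y ↦ |evenExtPrimitive ψ y| := fun y ↦ by
    simp only [odd.eq, abs_neg]
  have hIoi_nonneg : 0 ≤ᵐ[volume.restrict (Ioi 0)] ψ :=
    (ae_restrict_mem measurableSet_Ioi).mono fun z hz ↦ hψ_nonneg z (le_of_lt hz)
  calc |evenExtPrimitive ψ x| = |evenExtPrimitive ψ (|x|)| := (even_apply_abs habs_even x).symm
    _ = ∫ z in (0 : ℝ)..|x|, ψ z := by
      rw [eq_of_nonneg (abs_nonneg x), abs_of_nonneg]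
      exact intervalIntegral.integral_nonneg (abs_nonneg x) fun z hz ↦ hψ_nonneg z hz.1
    _ = ∫ z in Ioc 0 |x|, ψ z := intervalIntegral.integral_of_le (abs_nonneg x)
    _ ≤ ∫ z in Ioi 0, ψ z := setIntegral_mono_set hψ hIoi_nonneg Ioc_subset_Ioi_self.eventuallyLE

end evenExtPrimitive

theorem stmt5_general {ψ : ℝ → ℝ} (hψ : IntegrableOn ψ (Ioi 0))
    (hψ_nonneg : ∀ z, 0 ≤ z → 0 ≤ ψ z)
    {φ : ℝ → ℝ} (hφ : ∀ x, φ x = ∫ y in (0 : ℝ)..|x|, ∫ z in (0 : ℝ)..y, ψ z)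
    {ζ h : ℝ} (hζh : 0 ≤ ζ * h) :
    0 ≤ φ (ζ + h) - φ ζ - deriv φ ζ * h ∧
    φ (ζ + h) - φ ζ - deriv φ ζ * h ≤ φ (ζ + h) - φ ζ ∧
    φ (ζ + h) - φ ζ ≤ (∫ z in Ioi 0, ψ z) * |h| := by
  have hψ_int : ∀ x, 0 < x → IntervalIntegrable ψ volume 0 x := fun x hx ↦
    (intervalIntegrable_iff_integrableOn_Ioc_of_le hx.le).2 (hψ.mono_set Ioc_subset_Ioi_self)
  have hmono := evenExtPrimitive.monotone hψ_int hψ_nonneg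
  have hderiv : ∀ x, HasDerivAt φ (evenExtPrimitive ψ x) x :=
    funext hφ ▸ evenExtPrimitive.hasDerivAt_integral_primitive_abs hψ_int
  have hderiv_eq : deriv φ = evenExtPrimitive ψ := funext fun x ↦ (hderiv x).deriv
  have hconvex : ConvexOn ℝ univ φ :=
    Monotone.convexOn_univ_of_deriv (fun x ↦ (hderiv x).differentiableAt) (hderiv_eq ▸ hmono)
  have htangent : evenExtPrimitive ψ ζ * (ζ + h - ζ) ≤ φ (ζ + h) - φ ζ :=
    deriv_mul_sub_le_sub_of_convexOn hconvex (mem_univ _) (mem_univ _) (hderiv ζ)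
  have hlipschitz : |φ (ζ + h) - φ ζ| ≤ (∫ z in Ioi 0, ψ z) * |ζ + h - ζ| :=
    convex_univ.norm_image_sub_le_of_norm_hasDerivWithin_le
      (fun x _ ↦ (hderiv x).hasDerivWithinAt)
      (fun x _ ↦ evenExtPrimitive.abs_le_integral_Ioi hψ hψ_nonneg x) (mem_univ _) (mem_univ _)
  rw [add_sub_cancel_left] at htangent hlipschitz
  rw [hderiv_eq]
  exact ⟨sub_nonneg.2 htangent,
    sub_le_self _ (mul_nonneg_of_monotone_of_map_zero hmono evenExtPrimitive.odd.map_zero hζh),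
    (le_abs_self _).trans hlipschitz⟩

/-- If `ζ h ≥ 0`, then `0 ≤ D_h φ_k(ζ) ≤ Δ_h φ_k(ζ) ≤ |h|`. -/
theorem stmt5 (k : ℕ) (hk : 1 ≤ k) (ak akm1 : ℝ)
    (hak : 0 < ak) (haka : ak < akm1) (hakm1 : akm1 ≤ 1)
    (ψ : ℝ → ℝ) (hψ_cont : Continuous ψ) (hψ_nonneg : ∀ z, 0 ≤ ψ z)
    (hψ_supp : ∀ z, z ∉ Ioo ak akm1 → ψ z = 0)
    (hψ_int : (∫ z, ψ z) = 1)
    (φ : ℝ → ℝ) (hφ : ∀ x, φ x = ∫ y in (0:ℝ)..|x|, ∫ z in (0:ℝ)..y, ψ z) :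
    ∀ ζ h : ℝ, 0 ≤ ζ * h →
      0 ≤ φ (ζ + h) - φ ζ - deriv φ ζ * h ∧
      φ (ζ + h) - φ ζ - deriv φ ζ * h ≤ φ (ζ + h) - φ ζ ∧
      φ (ζ + h) - φ ζ ≤ |h| := by
  intro ζ h hζh
  have hmass : ∫ z in Ioi 0, ψ z = 1 := hψ_int ▸
    setIntegral_eq_integral_of_forall_compl_eq_zero fun z hz ↦ hψ_supp z fun hz' ↦
      hz (hak.trans hz'.1)
  simpa only [hmass, one_mul] using stmt5_general
    (integrable_of_integral_eq_one hψ_int).integrableOn (fun z _ ↦ hψ_nonneg z) hφ hζh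
end

section
/- For every real number n ≥ 1 and all x, y ∈ [0,m] with x ≠ y, writing l(x,y;u) = g(x,u) − g(y,u), one has ∫_U [ φ_k(x − y + l(x,y;u)) − φ_k(x − y) − φ_k′(x − y) l(x,y;u) ] μ(du) ≤ n/k + ∫_{{u ∈ U : g(m,u) > n}} g(m,u) μ(du). -/
open MeasureTheory Set Filter

/-!
Monotonicity of `g` gives `l = g x - g y` the sign of `a = x - y`, so the segment from `a` to
`a + l` avoids the origin and the Taylor remainder of `φ` is
`∫ t in |a|..|a| + |l|, ∫ z in |a|..t, ψ z`. As `∫ ψ = 1`, it is at most `|l|`. As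
`ψ z ≤ (2 / k) / ρ z ^ 2` and `ρ` is monotone, it is also at most `l ^ 2 / (k * ρ |a| ^ 2)`.

The first bound, with `|l| ≤ g m`, is used where `g m > n`. The second is used where `g m ≤ n`:
there `|l| ≤ n` and `1 ≤ n`, so `l ^ 2 ≤ n * min |l| (l ^ 2)`, and the integral of the minimum is at
most `ρ |a| ^ 2`.
-/

section TaylorRemainder

/-- The first-order Taylor remainder of `f` at `a` with increment `l`, the `D_l f(a)` of the theory
of stochastic equations with jumps. It is meaningful when `f` is differentiable at `a`; otherwise
`deriv f a` is `0`. -/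
noncomputable def taylorRemainder (f : ℝ → ℝ) (a l : ℝ) : ℝ :=
  f (a + l) - f a - deriv f a * l

variable {f f' : ℝ → ℝ} {a l : ℝ}

lemma taylorRemainder_neg_neg_of_even (hf : f.Even) (a l : ℝ) :
    taylorRemainder f (-a) (-l) = taylorRemainder f a l := by
  have hderiv : deriv f (-a) = -deriv f a := by
    rw [← neg_eq_iff_eq_neg, ← deriv_comp_neg, funext hf]
  rw [taylorRemainder, taylorRemainder, ← neg_add, hf, hf, hderiv, neg_mul_neg]

lemma taylorRemainder_abs_abs_of_even (hf : f.Even) (hal : 0 ≤ a * l) :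
    taylorRemainder f |a| |l| = taylorRemainder f a l := by
  rcases mul_nonneg_iff.mp hal with ⟨ha, hl⟩ | ⟨ha, hl⟩
  · rw [abs_of_nonneg ha, abs_of_nonneg hl]
  · rw [abs_of_nonpos ha, abs_of_nonpos hl, taylorRemainder_neg_neg_of_even hf]

lemma taylorRemainder_eq_integral (hf : ∀ t ∈ uIcc a (a + l), HasDerivAt f (f' t) t)
    (hf' : IntervalIntegrable f' volume a (a + l)) :
    taylorRemainder f a l = ∫ t in a..a + l, (f' t - f' a) := by
  rw [intervalIntegral.integral_sub hf' intervalIntegrable_const,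
    intervalIntegral.integral_eq_sub_of_hasDerivAt hf hf', intervalIntegral.integral_const,
    add_sub_cancel_left, smul_eq_mul, mul_comm, taylorRemainder, (hf a left_mem_uIcc).deriv]

end TaylorRemainder

section YamadaWatanabe

/-- The Yamada–Watanabe function with density `ψ`: the even function vanishing to first order at `0`
whose second derivative on `(0, ∞)` is `ψ`. It is a smoothing of `|x|` when `ψ` is a probability
density concentrated at small positive values. -/
noncomputable def yamadaWatanabe (ψ : ℝ → ℝ) (x : ℝ) : ℝ :=
  ∫ y in (0 : ℝ)..|x|, ∫ z in (0 : ℝ)..y, ψ z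

variable {ψ : ℝ → ℝ} {a l : ℝ}

lemma even_yamadaWatanabe (ψ : ℝ → ℝ) : (yamadaWatanabe ψ).Even := fun x => by
  rw [yamadaWatanabe, yamadaWatanabe, abs_neg]

lemma hasDerivAt_yamadaWatanabe (hψ : ∀ s t, IntervalIntegrable ψ volume s t) (ha : 0 < a) :
    HasDerivAt (yamadaWatanabe ψ) (∫ z in (0 : ℝ)..a, ψ z) a := by
  have heq : yamadaWatanabe ψ =ᶠ[nhds a] fun x => ∫ y in (0 : ℝ)..x, ∫ z in (0 : ℝ)..y, ψ z := by
    filter_upwards [lt_mem_nhds ha] with x hx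
    rw [yamadaWatanabe, abs_of_pos hx]
  have hcont := intervalIntegral.continuous_primitive hψ 0
  exact (hcont.integral_hasStrictDerivAt 0 a).hasDerivAt.congr_of_eventuallyEq heq

lemma taylorRemainder_yamadaWatanabe_eq_integral (hψ : ∀ s t, IntervalIntegrable ψ volume s t)
    (ha : a ≠ 0) (hal : 0 ≤ a * l) :
    taylorRemainder (yamadaWatanabe ψ) a l = ∫ t in |a|..|a| + |l|, ∫ z in |a|..t, ψ z := by
  have hderiv : ∀ t ∈ uIcc |a| (|a| + |l|),
      HasDerivAt (yamadaWatanabe ψ) (∫ z in (0 : ℝ)..t, ψ z) t := fun t ht =>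
    hasDerivAt_yamadaWatanabe hψ <| (abs_pos.mpr ha).trans_le <| by
      rw [uIcc_of_le (le_add_of_nonneg_right (abs_nonneg l))] at ht
      exact ht.1
  rw [← taylorRemainder_abs_abs_of_even (even_yamadaWatanabe ψ) hal,
    taylorRemainder_eq_integral hderiv
      ((intervalIntegral.continuous_primitive hψ 0).intervalIntegrable _ _)]
  simp only [intervalIntegral.integral_interval_sub_left (hψ _ _) (hψ _ _)]

lemma taylorRemainder_yamadaWatanabe_nonneg (hψ : ∀ s t, IntervalIntegrable ψ volume s t)
    (hψ_nonneg : ∀ z, 0 ≤ ψ z) (ha : a ≠ 0) (hal : 0 ≤ a * l) :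
    0 ≤ taylorRemainder (yamadaWatanabe ψ) a l := by
  rw [taylorRemainder_yamadaWatanabe_eq_integral hψ ha hal]
  exact intervalIntegral.integral_nonneg (le_add_of_nonneg_right (abs_nonneg l)) fun _ ht =>
    intervalIntegral.integral_nonneg ht.1 fun z _ => hψ_nonneg z

lemma taylorRemainder_yamadaWatanabe_le_integral_mul_abs (hψ : Integrable ψ)
    (hψ_nonneg : ∀ z, 0 ≤ ψ z) (ha : a ≠ 0) (hal : 0 ≤ a * l) :
    taylorRemainder (yamadaWatanabe ψ) a l ≤ (∫ z, ψ z) * |l| := by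
  have hψ' : ∀ s t, IntervalIntegrable ψ volume s t := fun _ _ => hψ.intervalIntegrable
  rw [taylorRemainder_yamadaWatanabe_eq_integral hψ' ha hal]
  calc ∫ t in |a|..|a| + |l|, ∫ z in |a|..t, ψ z
      ≤ ∫ _ in |a|..|a| + |l|, ∫ z, ψ z := by
        refine intervalIntegral.integral_mono_on (le_add_of_nonneg_right (abs_nonneg l))
          ((intervalIntegral.continuous_primitive hψ' |a|).intervalIntegrable _ _)
          intervalIntegrable_const fun t ht => ?_
        rw [intervalIntegral.integral_of_le ht.1]
        exact setIntegral_le_integral hψ (Eventually.of_forall hψ_nonneg)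
    _ = (∫ z, ψ z) * |l| := by
        rw [intervalIntegral.integral_const, add_sub_cancel_left, smul_eq_mul, mul_comm]

lemma taylorRemainder_yamadaWatanabe_le_mul_sq {C : ℝ}
    (hψ : ∀ s t, IntervalIntegrable ψ volume s t) (hψ_le : ∀ z, |a| ≤ z → ψ z ≤ 2 * C)
    (ha : a ≠ 0) (hal : 0 ≤ a * l) :
    taylorRemainder (yamadaWatanabe ψ) a l ≤ C * l ^ 2 := by
  rw [taylorRemainder_yamadaWatanabe_eq_integral hψ ha hal]
  calc ∫ t in |a|..|a| + |l|, ∫ z in |a|..t, ψ z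
      ≤ ∫ t in |a|..|a| + |l|, 2 * C * (t - |a|) := by
        refine intervalIntegral.integral_mono_on (le_add_of_nonneg_right (abs_nonneg l))
          ((intervalIntegral.continuous_primitive hψ |a|).intervalIntegrable _ _)
          (Continuous.intervalIntegrable (by fun_prop) _ _) fun t ht => ?_
        calc ∫ z in |a|..t, ψ z ≤ ∫ _ in |a|..t, 2 * C :=
              intervalIntegral.integral_mono_on ht.1 (hψ _ _) intervalIntegrable_const
                fun z hz => hψ_le z hz.1
          _ = 2 * C * (t - |a|) := by
              rw [intervalIntegral.integral_const, smul_eq_mul, mul_comm]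
    _ = C * l ^ 2 := by
        rw [intervalIntegral.integral_const_mul,
          intervalIntegral.integral_comp_sub_right (fun t => t) |a|, integral_id, ← sq_abs l]
        ring

end YamadaWatanabe

section Truncation

lemma sq_le_mul_min_abs_sq {l n : ℝ} (hn : 1 ≤ n) (hl : |l| ≤ n) :
    l ^ 2 ≤ n * min |l| (l ^ 2) := by
  rw [mul_min_of_nonneg _ _ (zero_le_one.trans hn), ← sq_abs]
  refine le_min ?_ (le_mul_of_one_le_left (sq_nonneg _) hn)
  rw [sq]
  gcongr

lemma le_mul_min_add_indicator {U : Type*} {F G l : U → ℝ} {n C : ℝ} {u : U} (hn : 1 ≤ n)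
    (hC : 0 ≤ C) (hlG : |l u| ≤ G u) (hF_abs : F u ≤ |l u|) (hF_sq : F u ≤ C * l u ^ 2) :
    F u ≤ C * n * min |l u| (l u ^ 2) + {u | G u > n}.indicator G u := by
  by_cases hu : G u > n
  · rw [indicator_of_mem (by exact hu)]
    calc F u ≤ G u := hF_abs.trans hlG
      _ ≤ C * n * min |l u| (l u ^ 2) + G u := le_add_of_nonneg_left (by positivity)
  · rw [indicator_of_notMem (by exact hu), add_zero, mul_assoc]
    calc F u ≤ C * l u ^ 2 := hF_sq
      _ ≤ C * (n * min |l u| (l u ^ 2)) := by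
        gcongr
        exact sq_le_mul_min_abs_sq hn (hlG.trans (not_lt.mp hu))

variable {U : Type*} [MeasurableSpace U] {μ : Measure U} {F G l : U → ℝ} {n C : ℝ}

lemma integrable_min_abs_sq_of_abs_le (hl : AEMeasurable l μ) (hlG : ∀ u, |l u| ≤ G u)
    (hG : Integrable (fun u => min (G u) (G u ^ 2)) μ) :
    Integrable (fun u => min |l u| (l u ^ 2)) μ := by
  refine hG.mono' (AEMeasurable.aestronglyMeasurable (by fun_prop))
    (Eventually.of_forall fun u => ?_)
  rw [Real.norm_of_nonneg (by positivity), ← sq_abs]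
  have := hlG u
  gcongr

lemma integrableOn_setOf_lt_of_integrable_min_sq (hn : 1 ≤ n) (hG : AEMeasurable G μ)
    (hG_int : Integrable (fun u => min (G u) (G u ^ 2)) μ) :
    IntegrableOn G {u | G u > n} μ := by
  refine hG_int.integrableOn.mono' hG.aestronglyMeasurable.restrict ?_
  filter_upwards [ae_restrict_mem₀ (nullMeasurableSet_lt aemeasurable_const hG)]
    with u (hu : n < G u)
  have hG_one : 1 ≤ G u := hn.trans hu.le
  rw [Real.norm_of_nonneg (zero_le_one.trans hG_one)]
  exact le_min le_rfl (le_self_pow₀ hG_one two_ne_zero)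

theorem integral_le_mul_integral_min_add_setIntegral (hn : 1 ≤ n) (hC : 0 ≤ C)
    (hl : AEMeasurable l μ) (hG : AEMeasurable G μ)
    (hG_int : Integrable (fun u => min (G u) (G u ^ 2)) μ) (hlG : ∀ u, |l u| ≤ G u)
    (hF_nonneg : ∀ u, 0 ≤ F u) (hF_abs : ∀ u, F u ≤ |l u|) (hF_sq : ∀ u, F u ≤ C * l u ^ 2) :
    ∫ u, F u ∂μ ≤ C * n * (∫ u, min |l u| (l u ^ 2) ∂μ) + ∫ u in {u | G u > n}, G u ∂μ := by
  have hset : NullMeasurableSet {u | G u > n} μ := nullMeasurableSet_lt aemeasurable_const hG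
  have hmin : Integrable (fun u => C * n * min |l u| (l u ^ 2)) μ :=
    (integrable_min_abs_sq_of_abs_le hl hlG hG_int).const_mul _
  have hind : Integrable ({u | G u > n}.indicator G) μ :=
    (integrableOn_setOf_lt_of_integrable_min_sq hn hG hG_int).integrable_indicator₀ hset
  calc ∫ u, F u ∂μ
      ≤ ∫ u, (C * n * min |l u| (l u ^ 2) + {u | G u > n}.indicator G u) ∂μ :=
        integral_mono_of_nonneg (Eventually.of_forall hF_nonneg) (hmin.add hind)
          (Eventually.of_forall fun u =>
            le_mul_min_add_indicator hn hC (hlG u) (hF_abs u) (hF_sq u))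
    _ = C * n * (∫ u, min |l u| (l u ^ 2) ∂μ) + ∫ u in {u | G u > n}, G u ∂μ := by
        rw [integral_add hmin hind, integral_const_mul, integral_indicator₀ hset]

end Truncation

lemma abs_sub_le_of_monotoneOn_Icc {α : Type*} [Preorder α] {g : α → ℝ} {a b x y : α}
    (hg : MonotoneOn g (Icc a b)) (hga : 0 ≤ g a) (hx : x ∈ Icc a b) (hy : y ∈ Icc a b) :
    |g x - g y| ≤ g b := by
  have hab : a ≤ b := hx.1.trans hx.2
  have hbounds : ∀ z ∈ Icc a b, 0 ≤ g z ∧ g z ≤ g b := fun z hz =>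
    ⟨hga.trans (hg (left_mem_Icc.mpr hab) hz hz.1), hg hz (right_mem_Icc.mpr hab) hz.2⟩
  exact abs_sub_le_of_nonneg_of_le (hbounds x hx).1 (hbounds x hx).2 (hbounds y hy).1
    (hbounds y hy).2

theorem stmt7_general {U : Type*} [MeasurableSpace U] {μ : Measure U} {k : ℝ} (hk : 0 < k)
    {ψ : ℝ → ℝ} (hψ : Integrable ψ) (hψ_nonneg : ∀ z, 0 ≤ ψ z) (hψ_le_one : ∫ z, ψ z ≤ 1)
    {ρ : ℝ → ℝ} (hρ_mono : MonotoneOn ρ (Ioi 0)) (hρ_pos : ∀ z, 0 < z → 0 < ρ z)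
    (hψρ : ∀ z, 0 < z → ψ z ≤ 2 / k * (ρ z ^ 2)⁻¹)
    {m : ℝ} {g : ℝ → U → ℝ} (hg_meas : ∀ x ∈ Icc 0 m, AEMeasurable (g x) μ)
    (hg_zero : ∀ u, 0 ≤ g 0 u) (hg_mono : ∀ u, MonotoneOn (g · u) (Icc 0 m))
    (hg_int : Integrable (fun u => min (g m u) (g m u ^ 2)) μ)
    (hg_bound : ∀ x ∈ Icc 0 m, ∀ y ∈ Icc 0 m,
      ∫ u, min |g x u - g y u| ((g x u - g y u) ^ 2) ∂μ ≤ ρ |x - y| ^ 2)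
    {n : ℝ} (hn : 1 ≤ n) {x y : ℝ} (hx : x ∈ Icc 0 m) (hy : y ∈ Icc 0 m) (hxy : x ≠ y) :
    ∫ u, taylorRemainder (yamadaWatanabe ψ) (x - y) (g x u - g y u) ∂μ
      ≤ n / k + ∫ u in {u | g m u > n}, g m u ∂μ := by
  have hm : m ∈ Icc 0 m := ⟨hx.1.trans hx.2, le_rfl⟩
  have ha : x - y ≠ 0 := sub_ne_zero.mpr hxy
  have hρ := hρ_pos _ (abs_pos.mpr ha)
  set C := (k * ρ |x - y| ^ 2)⁻¹ with hC
  have hψC : ∀ z, |x - y| ≤ z → ψ z ≤ 2 * C := fun z hz => by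
    have hz_pos := (abs_pos.mpr ha).trans_le hz
    have hρz : ρ |x - y| ≤ ρ z := hρ_mono (abs_pos.mpr ha) hz_pos hz
    calc ψ z ≤ 2 / k * (ρ z ^ 2)⁻¹ := hψρ z hz_pos
      _ ≤ 2 / k * (ρ |x - y| ^ 2)⁻¹ := by gcongr
      _ = 2 * C := by rw [hC, mul_inv, div_eq_mul_inv, mul_assoc]
  have hsign : ∀ u, 0 ≤ (x - y) * (g x u - g y u) := fun u =>
    (monotoneOn_id.monovaryOn (hg_mono u)).sub_mul_sub_nonneg hy hx
  have hψ' : ∀ s t, IntervalIntegrable ψ volume s t := fun _ _ => hψ.intervalIntegrable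
  calc ∫ u, taylorRemainder (yamadaWatanabe ψ) (x - y) (g x u - g y u) ∂μ
      ≤ C * n * (∫ u, min |g x u - g y u| ((g x u - g y u) ^ 2) ∂μ)
          + ∫ u in {u | g m u > n}, g m u ∂μ :=
        integral_le_mul_integral_min_add_setIntegral hn (by positivity)
          ((hg_meas x hx).sub (hg_meas y hy)) (hg_meas m hm) hg_int
          (fun u => abs_sub_le_of_monotoneOn_Icc (hg_mono u) (hg_zero u) hx hy)
          (fun u => taylorRemainder_yamadaWatanabe_nonneg hψ' hψ_nonneg ha (hsign u))
          (fun u => (taylorRemainder_yamadaWatanabe_le_integral_mul_abs hψ hψ_nonneg ha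
            (hsign u)).trans (mul_le_of_le_one_left (abs_nonneg _) hψ_le_one))
          (fun u => taylorRemainder_yamadaWatanabe_le_mul_sq hψ' hψC ha (hsign u))
    _ ≤ C * n * ρ |x - y| ^ 2 + ∫ u in {u | g m u > n}, g m u ∂μ := by
        gcongr
        exact hg_bound x hx y hy
    _ = n / k + ∫ u in {u | g m u > n}, g m u ∂μ := by
        rw [hC]
        field_simp

/-- Estimate on `∫_U D_{l(x,y;u)} φ_k(x-y) μ(du)` under condition (3.b):
the integral is bounded by `n/k + ∫_{g(m,u) > n} g(m,u) μ(du)`. -/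
theorem stmt7 {U : Type*} [MeasurableSpace U] (μ : Measure U)
    (k : ℕ) (hk : 1 ≤ k) (ak akm1 : ℝ)
    (hak : 0 < ak) (haka : ak < akm1) (hakm1 : akm1 ≤ 1)
    (ψ : ℝ → ℝ) (hψ_cont : Continuous ψ) (hψ_nonneg : ∀ z, 0 ≤ ψ z)
    (hψ_supp : ∀ z, z ∉ Ioo ak akm1 → ψ z = 0)
    (hψ_int : (∫ z, ψ z) = 1)
    (φ : ℝ → ℝ) (hφ : ∀ x, φ x = ∫ y in (0:ℝ)..|x|, ∫ z in (0:ℝ)..y, ψ z)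
    (ρ : ℝ → ℝ) (hρ_nonneg : ∀ z, 0 ≤ z → 0 ≤ ρ z)
    (hρ_mono : MonotoneOn ρ (Ici 0)) (hρ_pos : ∀ z, 0 < z → 0 < ρ z)
    (hψρ : ∀ z ∈ Ioo ak akm1, ψ z ≤ (2 / k) * ((ρ z) ^ 2)⁻¹)
    (m : ℝ) (hm : 1 ≤ m)
    (g : ℝ → U → ℝ)
    (hg_meas : ∀ x ∈ Icc (0:ℝ) m, Measurable (g x))
    (hg_nonneg : ∀ x ∈ Icc (0:ℝ) m, ∀ u, 0 ≤ g x u)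
    (hg_mono : ∀ u : U, ∀ x ∈ Icc (0:ℝ) m, ∀ y ∈ Icc (0:ℝ) m, x ≤ y → g x u ≤ g y u)
    (hg_int : Integrable (fun u => min (g m u) ((g m u) ^ 2)) μ)
    (hg_bound : ∀ x ∈ Icc (0:ℝ) m, ∀ y ∈ Icc (0:ℝ) m,
      ∫ u, min |g x u - g y u| ((g x u - g y u) ^ 2) ∂μ ≤ (ρ |x - y|) ^ 2)
    (n : ℝ) (hn : 1 ≤ n) :
    ∀ x ∈ Icc (0:ℝ) m, ∀ y ∈ Icc (0:ℝ) m, x ≠ y →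
      (∫ u, (φ (x - y + (g x u - g y u)) - φ (x - y)
          - deriv φ (x - y) * (g x u - g y u)) ∂μ)
        ≤ n / k + ∫ u in {u : U | g m u > n}, g m u ∂μ := by
  obtain rfl : φ = yamadaWatanabe ψ := funext hφ
  exact fun x hx y hy => stmt7_general (Nat.cast_pos.mpr hk)
    (.of_integral_ne_zero (by simp [hψ_int])) hψ_nonneg hψ_int.le
    (hρ_mono.mono Ioi_subset_Ici_self) hρ_pos
    (fun z _ => if hz : z ∈ Ioo ak akm1 then hψρ z hz else (hψ_supp z hz).trans_le (by positivity))
    (fun x hx => (hg_meas x hx).aemeasurable) (hg_nonneg 0 ⟨le_rfl, zero_le_one.trans hm⟩)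
    (fun u x hx y hy => hg_mono u x hx y hy) hg_int hg_bound hn hx hy
end

section
/- For every real number n ≥ 1 and all x, y ∈ [0,m] with x ≠ y, writing l(x,y;u) = g(x,u) − g(y,u), one has ∫_U [ φ_k(x − y + l(x,y;u)) − φ_k(x − y) − φ_k′(x − y) l(x,y;u) ] μ(du) ≤ (n/k) ∫_U min(f(u), f(u)²) μ(du) + ρ(m) ∫_{{u ∈ U : f(u) > n}} f(u) μ(du). -/
open MeasureTheory Set Filter

/-!
Since `φ'(x) = ∫_0^x ψ` on `(0, ∞)` and `φ` is even, the linearization error of `φ` at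
`d = x - y ≠ 0` with an increment `l` of the same sign is `∫_{|d|}^{|d|+|l|} ∫_{|d|}^s ψ(z) dz ds`;
the increment `l = g x u - g y u` has the sign of `d` because `g` is monotone in its first
variable. Bounding the inner integral by the total mass of `ψ` makes the error at most
`|l| ≤ ρ(m) f(u)`. Bounding `ψ` by its supremum over `[|d|, ∞)`, which is at most `(2/k) ρ(|d|)⁻²`,
makes it at most `l² / (k ρ(|d|)²) ≤ f(u)² / k`. The linear bound is used where `f > n` and the
quadratic one where `f ≤ n`, since there `f² ≤ n min(f, f²)`.
-/

section LinearizationError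

/-- The error `D_h φ(x) = φ(x + h) - φ(x) - φ'(x) h` of the first-order approximation to `φ` at `x`.
It is the integrand of the theorem, for `φ = φ_k`, `x - y` and `l(x, y; u)` in place of `φ`, `x` and
`h`. Where `φ` is not differentiable, `deriv φ x` has the junk value `0`. -/
noncomputable def linearizationError (φ : ℝ → ℝ) (x h : ℝ) : ℝ :=
  φ (x + h) - φ x - deriv φ x * h

variable {φ φ' : ℝ → ℝ} {x h : ℝ}

lemma linearizationError_eq_integral (hφ : ∀ s ∈ uIcc x (x + h), HasDerivAt φ (φ' s) s)
    (hφ' : IntervalIntegrable φ' volume x (x + h)) :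
    linearizationError φ x h = ∫ s in x..x + h, (φ' s - φ' x) := by
  rw [intervalIntegral.integral_sub hφ' intervalIntegrable_const,
    intervalIntegral.integral_eq_sub_of_hasDerivAt hφ hφ', intervalIntegral.integral_const,
    linearizationError, (hφ x left_mem_uIcc).deriv, add_sub_cancel_left, smul_eq_mul, mul_comm h]

lemma aestronglyMeasurable_linearizationError {U : Type*} [MeasurableSpace U] {μ : Measure U}
    {l : U → ℝ} (hφ : Measurable φ) (hl : AEMeasurable l μ) (x : ℝ) :
    AEStronglyMeasurable (fun u => linearizationError φ x (l u)) μ :=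
  (((hφ.comp_aemeasurable (hl.const_add x)).sub_const _).sub
    (hl.const_mul _)).aestronglyMeasurable

lemma linearizationError_neg_neg (hφ : φ.Even) (x h : ℝ) :
    linearizationError φ (-x) (-h) = linearizationError φ x h := by
  have hderiv : deriv φ (-x) = -deriv φ x := by
    rw [← neg_eq_iff_eq_neg, ← deriv_comp_neg, funext hφ]
  rw [linearizationError, linearizationError, hderiv, ← neg_add, hφ, hφ, neg_mul_neg]

lemma linearizationError_abs_abs (hφ : φ.Even) (hxh : 0 ≤ x * h) :
    linearizationError φ |x| |h| = linearizationError φ x h := by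
  rcases mul_nonneg_iff.1 hxh with ⟨hx, hh⟩ | ⟨hx, hh⟩
  · rw [abs_of_nonneg hx, abs_of_nonneg hh]
  · rw [abs_of_nonpos hx, abs_of_nonpos hh, linearizationError_neg_neg hφ]

end LinearizationError

section EvenDoublePrimitive

/-- The even function that vanishes at `0` and has derivative `x ↦ ∫_0^x ψ` on `(0, ∞)`. For
`ψ = ψ_k` it is the Yamada–Watanabe approximation `φ_k` of the absolute value. -/
noncomputable def evenDoublePrimitive (ψ : ℝ → ℝ) (x : ℝ) : ℝ :=
  ∫ y in (0 : ℝ)..|x|, ∫ z in (0 : ℝ)..y, ψ z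

variable {ψ : ℝ → ℝ} {d l : ℝ}

lemma even_evenDoublePrimitive (ψ : ℝ → ℝ) : (evenDoublePrimitive ψ).Even := fun x => by
  rw [evenDoublePrimitive, evenDoublePrimitive, abs_neg]

lemma continuous_evenDoublePrimitive (hψ : ∀ a b, IntervalIntegrable ψ volume a b) :
    Continuous (evenDoublePrimitive ψ) :=
  have hΨ : Continuous fun y => ∫ z in (0 : ℝ)..y, ψ z := intervalIntegral.continuous_primitive hψ 0
  (intervalIntegral.continuous_primitive (fun _ _ => hΨ.intervalIntegrable _ _) 0).comp
    continuous_abs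

lemma hasDerivAt_evenDoublePrimitive (hψ : ∀ a b, IntervalIntegrable ψ volume a b) {x : ℝ}
    (hx : 0 < x) : HasDerivAt (evenDoublePrimitive ψ) (∫ z in (0 : ℝ)..x, ψ z) x := by
  have hΨ : Continuous fun y => ∫ z in (0 : ℝ)..y, ψ z := intervalIntegral.continuous_primitive hψ 0
  refine (hΨ.integral_hasStrictDerivAt 0 x).hasDerivAt.congr_of_eventuallyEq ?_
  filter_upwards [lt_mem_nhds hx] with t ht
  rw [evenDoublePrimitive, abs_of_pos ht]

lemma linearizationError_evenDoublePrimitive (hψ : ∀ a b, IntervalIntegrable ψ volume a b)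
    (hd : d ≠ 0) (hdl : 0 ≤ d * l) :
    linearizationError (evenDoublePrimitive ψ) d l
      = ∫ s in |d|..|d| + |l|, ∫ z in |d|..s, ψ z := by
  rw [← linearizationError_abs_abs (even_evenDoublePrimitive ψ) hdl,
    linearizationError_eq_integral (φ' := fun s => ∫ z in (0 : ℝ)..s, ψ z)]
  · simp only [intervalIntegral.integral_interval_sub_left (hψ _ _) (hψ _ _)]
  · intro s hs
    rw [uIcc_of_le (le_add_of_nonneg_right (abs_nonneg l))] at hs
    exact hasDerivAt_evenDoublePrimitive hψ ((abs_pos.2 hd).trans_le hs.1)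
  · exact (intervalIntegral.continuous_primitive hψ 0).intervalIntegrable _ _

lemma linearizationError_evenDoublePrimitive_nonneg
    (hψ : ∀ a b, IntervalIntegrable ψ volume a b) (hψ_nonneg : ∀ z, 0 ≤ ψ z)
    (hd : d ≠ 0) (hdl : 0 ≤ d * l) :
    0 ≤ linearizationError (evenDoublePrimitive ψ) d l := by
  rw [linearizationError_evenDoublePrimitive hψ hd hdl]
  exact intervalIntegral.integral_nonneg (le_add_of_nonneg_right (abs_nonneg l)) fun s hs =>
    intervalIntegral.integral_nonneg hs.1 fun z _ => hψ_nonneg z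

lemma linearizationError_evenDoublePrimitive_le_integral_mul_abs
    (hψ : Integrable ψ) (hψ_nonneg : ∀ z, 0 ≤ ψ z) (hd : d ≠ 0) (hdl : 0 ≤ d * l) :
    linearizationError (evenDoublePrimitive ψ) d l ≤ (∫ z, ψ z) * |l| := by
  have hψ_loc : ∀ a b, IntervalIntegrable ψ volume a b := fun _ _ => hψ.intervalIntegrable
  rw [linearizationError_evenDoublePrimitive hψ_loc hd hdl]
  calc ∫ s in |d|..|d| + |l|, ∫ z in |d|..s, ψ z
      ≤ ∫ _ in |d|..|d| + |l|, ∫ z, ψ z := by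
        refine intervalIntegral.integral_mono_on (le_add_of_nonneg_right (abs_nonneg l))
          ((intervalIntegral.continuous_primitive hψ_loc _).intervalIntegrable _ _)
          intervalIntegrable_const fun s hs => ?_
        rw [intervalIntegral.integral_of_le hs.1]
        exact setIntegral_le_integral hψ (ae_of_all _ hψ_nonneg)
    _ = (∫ z, ψ z) * |l| := by
        rw [intervalIntegral.integral_const, add_sub_cancel_left, smul_eq_mul, mul_comm]

lemma linearizationError_evenDoublePrimitive_le_mul_sq
    (hψ : ∀ a b, IntervalIntegrable ψ volume a b) {C : ℝ} (hC : ∀ z, |d| ≤ z → ψ z ≤ C)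
    (hd : d ≠ 0) (hdl : 0 ≤ d * l) :
    linearizationError (evenDoublePrimitive ψ) d l ≤ C * l ^ 2 / 2 := by
  rw [linearizationError_evenDoublePrimitive hψ hd hdl]
  calc ∫ s in |d|..|d| + |l|, ∫ z in |d|..s, ψ z
      ≤ ∫ s in |d|..|d| + |l|, ∫ _ in |d|..s, C :=
        intervalIntegral.integral_mono_on (le_add_of_nonneg_right (abs_nonneg l))
          ((intervalIntegral.continuous_primitive hψ _).intervalIntegrable _ _)
          ((intervalIntegral.continuous_primitive (fun _ _ => intervalIntegrable_const)
            _).intervalIntegrable _ _)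
          fun s hs => intervalIntegral.integral_mono_on hs.1 (hψ _ _) intervalIntegrable_const
            fun z hz => hC z hz.1
    _ = ∫ s in |d|..|d| + |l|, C * (s - |d|) := by
        simp only [intervalIntegral.integral_const, smul_eq_mul, mul_comm C]
    _ = C * l ^ 2 / 2 := by
        rw [intervalIntegral.integral_const_mul,
          intervalIntegral.integral_comp_sub_right (fun s => s), integral_id, sub_self,
          add_sub_cancel_left, sq_abs]
        ring

lemma linearizationError_evenDoublePrimitive_le_inv_mul_sq {k t : ℝ} {ρ : ℝ → ℝ} (hk : 0 < k)
    (hψ : ∀ a b, IntervalIntegrable ψ volume a b) (hρ_mono : MonotoneOn ρ (Ioi 0))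
    (hρ_pos : ∀ z, 0 < z → 0 < ρ z) (hψρ : ∀ z, 0 < z → ψ z ≤ 2 / k * (ρ z ^ 2)⁻¹)
    (hd : d ≠ 0) (hdl : 0 ≤ d * l) (hl : |l| ≤ ρ |d| * t) :
    linearizationError (evenDoublePrimitive ψ) d l ≤ k⁻¹ * t ^ 2 := by
  have hd_pos : 0 < |d| := abs_pos.2 hd
  have hρd : 0 < ρ |d| := hρ_pos _ hd_pos
  have hψ_le : ∀ z, |d| ≤ z → ψ z ≤ 2 / k * (ρ |d| ^ 2)⁻¹ := fun z hz =>
    have hz_pos : 0 < z := hd_pos.trans_le hz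
    (hψρ z hz_pos).trans (by gcongr; exact hρ_mono hd_pos hz_pos hz)
  calc linearizationError (evenDoublePrimitive ψ) d l
      ≤ 2 / k * (ρ |d| ^ 2)⁻¹ * l ^ 2 / 2 :=
        linearizationError_evenDoublePrimitive_le_mul_sq hψ hψ_le hd hdl
    _ ≤ 2 / k * (ρ |d| ^ 2)⁻¹ * (ρ |d| * t) ^ 2 / 2 := by
        rw [← sq_abs l]
        gcongr
    _ = k⁻¹ * t ^ 2 := by field_simp

end EvenDoublePrimitive

section Truncation

lemma sq_le_mul_min_self_sq {t n : ℝ} (hn : 1 ≤ n) (ht : 0 ≤ t) (htn : t ≤ n) :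
    t ^ 2 ≤ n * min t (t ^ 2) := by
  rw [mul_min_of_nonneg _ _ (zero_le_one.trans hn), sq]
  exact le_min (mul_le_mul_of_nonneg_right htn ht)
    (le_mul_of_one_le_left (mul_self_nonneg t) hn)

lemma min_self_sq_of_one_le {t : ℝ} (ht : 1 ≤ t) : min t (t ^ 2) = t :=
  min_eq_left (le_self_pow₀ ht two_ne_zero)

variable {U : Type*} [MeasurableSpace U] {μ : Measure U} {f : U → ℝ} {n : ℝ}

lemma nullMeasurableSet_lt_of_integrable_min_sq
    (hf : Integrable (fun u => min (f u) (f u ^ 2)) μ) (hn : 1 ≤ n) :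
    NullMeasurableSet {u | n < f u} μ := by
  have hlt_iff : ∀ u, n < f u ↔ n < min (f u) (f u ^ 2) := fun u =>
    ⟨fun hu => hu.trans_eq (min_self_sq_of_one_le (hn.trans hu.le)).symm,
      fun hu => hu.trans_le (min_le_left _ _)⟩
  simp only [hlt_iff]
  exact nullMeasurableSet_lt aemeasurable_const hf.aemeasurable

lemma integrableOn_lt_of_integrable_min_sq
    (hf : Integrable (fun u => min (f u) (f u ^ 2)) μ) (hn : 1 ≤ n) :
    IntegrableOn f {u | n < f u} μ := by
  refine hf.integrableOn.congr ?_
  filter_upwards [ae_restrict_mem₀ (nullMeasurableSet_lt_of_integrable_min_sq hf hn)] with u hu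
  exact min_self_sq_of_one_le (hn.trans (le_of_lt hu))

lemma integrable_and_integral_le_of_le_sq_of_le_mul {F : U → ℝ} {A B : ℝ}
    (hf : Integrable (fun u => min (f u) (f u ^ 2)) μ) (hf_nonneg : ∀ u, 0 ≤ f u) (hn : 1 ≤ n)
    (hF_meas : AEStronglyMeasurable F μ) (hF_nonneg : ∀ u, 0 ≤ F u) (hA : 0 ≤ A)
    (hF_sq : ∀ u, F u ≤ A * f u ^ 2) (hF_mul : ∀ u, F u ≤ B * f u) :
    Integrable F μ ∧
      ∫ u, F u ∂μ ≤ A * n * ∫ u, min (f u) (f u ^ 2) ∂μ + B * ∫ u in {u | n < f u}, f u ∂μ := by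
  have hS := nullMeasurableSet_lt_of_integrable_min_sq hf hn
  have hmin_int : Integrable (fun u => A * n * min (f u) (f u ^ 2)) μ := hf.const_mul _
  have htail_int : Integrable ({u | n < f u}.indicator fun u => B * f u) μ :=
    IntegrableOn.integrable_indicator₀ ((integrableOn_lt_of_integrable_min_sq hf hn).const_mul B) hS
  have hF_le : ∀ u, F u ≤ A * n * min (f u) (f u ^ 2)
      + {u | n < f u}.indicator (fun u => B * f u) u := fun u => by
    have hfu := hf_nonneg u
    by_cases hu : u ∈ {u | n < f u}
    · rw [indicator_of_mem hu]
      exact (hF_mul u).trans (le_add_of_nonneg_left (by positivity))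
    · rw [indicator_of_notMem hu, add_zero, mul_assoc]
      exact (hF_sq u).trans
        (mul_le_mul_of_nonneg_left (sq_le_mul_min_self_sq hn hfu (not_lt.1 hu)) hA)
  have hF_int : Integrable F μ := (hmin_int.add htail_int).mono' hF_meas <|
    ae_of_all _ fun u => (Real.norm_of_nonneg (hF_nonneg u)).trans_le (hF_le u)
  refine ⟨hF_int, (integral_mono hF_int (hmin_int.add htail_int) hF_le).trans_eq ?_⟩
  simp only [Pi.add_apply]
  rw [integral_add hmin_int htail_int, integral_indicator₀ hS, integral_const_mul,
    integral_const_mul]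

end Truncation

theorem stmt9_general {U : Type*} [MeasurableSpace U] {μ : Measure U} {k : ℝ} (hk : 0 < k)
    {ψ : ℝ → ℝ} (hψ_nonneg : ∀ z, 0 ≤ ψ z) (hψ_int : Integrable ψ) (hψ_mass : ∫ z, ψ z ≤ 1)
    {ρ : ℝ → ℝ} (hρ_mono : MonotoneOn ρ (Ioi 0)) (hρ_pos : ∀ z, 0 < z → 0 < ρ z)
    (hψρ : ∀ z, 0 < z → ψ z ≤ 2 / k * (ρ z ^ 2)⁻¹)
    {f : U → ℝ} (hf_nonneg : ∀ u, 0 ≤ f u) (hf_int : Integrable (fun u => min (f u) (f u ^ 2)) μ)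
    {s : Set ℝ} {g : ℝ → U → ℝ} (hg_meas : ∀ x ∈ s, AEMeasurable (g x) μ)
    (hg_mono : ∀ u, MonotoneOn (g · u) s)
    (hg_lip : ∀ x ∈ s, ∀ y ∈ s, ∀ u, |g x u - g y u| ≤ ρ |x - y| * f u)
    {n : ℝ} (hn : 1 ≤ n) {x y m : ℝ} (hx : x ∈ s) (hy : y ∈ s) (hxy : x ≠ y) (hm : |x - y| ≤ m) :
    Integrable (fun u => linearizationError (evenDoublePrimitive ψ) (x - y) (g x u - g y u)) μ ∧
      ∫ u, linearizationError (evenDoublePrimitive ψ) (x - y) (g x u - g y u) ∂μ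
        ≤ n / k * ∫ u, min (f u) (f u ^ 2) ∂μ + ρ m * ∫ u in {u | n < f u}, f u ∂μ := by
  have hψ_loc : ∀ a b, IntervalIntegrable ψ volume a b := fun _ _ => hψ_int.intervalIntegrable
  have hd : x - y ≠ 0 := sub_ne_zero.2 hxy
  have hd_pos : 0 < |x - y| := abs_pos.2 hd
  have hsign : ∀ u, 0 ≤ (x - y) * (g x u - g y u) := fun u =>
    (monovaryOn_id_iff.2 (hg_mono u)).symm.sub_mul_sub_nonneg hy hx
  have herr_sq : ∀ u, linearizationError (evenDoublePrimitive ψ) (x - y) (g x u - g y u)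
      ≤ k⁻¹ * f u ^ 2 := fun u =>
    linearizationError_evenDoublePrimitive_le_inv_mul_sq hk hψ_loc hρ_mono hρ_pos hψρ hd (hsign u)
      (hg_lip x hx y hy u)
  have herr_mul : ∀ u, linearizationError (evenDoublePrimitive ψ) (x - y) (g x u - g y u)
      ≤ ρ m * f u := fun u =>
    calc _ ≤ (∫ z, ψ z) * |g x u - g y u| :=
          linearizationError_evenDoublePrimitive_le_integral_mul_abs hψ_int hψ_nonneg hd (hsign u)
      _ ≤ |g x u - g y u| := mul_le_of_le_one_left (abs_nonneg _) hψ_mass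
      _ ≤ ρ |x - y| * f u := hg_lip x hx y hy u
      _ ≤ ρ m * f u :=
          mul_le_mul_of_nonneg_right (hρ_mono hd_pos (hd_pos.trans_le hm) hm) (hf_nonneg u)
  rw [div_eq_inv_mul]
  exact integrable_and_integral_le_of_le_sq_of_le_mul hf_int hf_nonneg hn
    (aestronglyMeasurable_linearizationError (continuous_evenDoublePrimitive hψ_loc).measurable
      ((hg_meas x hx).sub (hg_meas y hy)) _)
    (fun u => linearizationError_evenDoublePrimitive_nonneg hψ_loc hψ_nonneg hd (hsign u))
    (inv_nonneg.2 hk.le) herr_sq herr_mul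

/-- Estimate on `∫_U D_{l(x,y;u)} φ_k(x-y) μ(du)` under condition (3.c):
the integral is bounded by `(n/k) ∫ min(f, f²) dμ + ρ(m) ∫_{f > n} f dμ`. -/
theorem stmt9 {U : Type*} [MeasurableSpace U] (μ : Measure U)
    (k : ℕ) (hk : 1 ≤ k) (ak akm1 : ℝ)
    (hak : 0 < ak) (haka : ak < akm1) (hakm1 : akm1 ≤ 1)
    (ψ : ℝ → ℝ) (hψ_cont : Continuous ψ) (hψ_nonneg : ∀ z, 0 ≤ ψ z)
    (hψ_supp : ∀ z, z ∉ Ioo ak akm1 → ψ z = 0)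
    (hψ_int : (∫ z, ψ z) = 1)
    (φ : ℝ → ℝ) (hφ : ∀ x, φ x = ∫ y in (0:ℝ)..|x|, ∫ z in (0:ℝ)..y, ψ z)
    (ρ : ℝ → ℝ) (hρ_nonneg : ∀ z, 0 ≤ z → 0 ≤ ρ z)
    (hρ_mono : MonotoneOn ρ (Ici 0)) (hρ_pos : ∀ z, 0 < z → 0 < ρ z)
    (hψρ : ∀ z ∈ Ioo ak akm1, ψ z ≤ (2 / k) * ((ρ z) ^ 2)⁻¹)
    (m : ℝ) (hm : 1 ≤ m)
    (f : U → ℝ) (hf_meas : Measurable f) (hf_nonneg : ∀ u, 0 ≤ f u)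
    (hf_int : Integrable (fun u => min (f u) ((f u) ^ 2)) μ)
    (g : ℝ → U → ℝ)
    (hg_meas : ∀ x ∈ Icc (0:ℝ) m, Measurable (g x))
    (hg_nonneg : ∀ x ∈ Icc (0:ℝ) m, ∀ u, 0 ≤ g x u)
    (hg_mono : ∀ u : U, ∀ x ∈ Icc (0:ℝ) m, ∀ y ∈ Icc (0:ℝ) m, x ≤ y → g x u ≤ g y u)
    (hg_lip : ∀ x ∈ Icc (0:ℝ) m, ∀ y ∈ Icc (0:ℝ) m, ∀ u : U,
      |g x u - g y u| ≤ ρ |x - y| * f u)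
    (n : ℝ) (hn : 1 ≤ n) :
    ∀ x ∈ Icc (0:ℝ) m, ∀ y ∈ Icc (0:ℝ) m, x ≠ y →
      (∫ u, (φ (x - y + (g x u - g y u)) - φ (x - y)
          - deriv φ (x - y) * (g x u - g y u)) ∂μ)
        ≤ (n / k) * (∫ u, min (f u) ((f u) ^ 2) ∂μ)
          + ρ m * ∫ u in {u : U | f u > n}, f u ∂μ := by
  intro x hx y hy hxy
  obtain rfl : φ = evenDoublePrimitive ψ := funext hφ
  have hψρ' : ∀ z, 0 < z → ψ z ≤ 2 / k * (ρ z ^ 2)⁻¹ := fun z _ => by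
    by_cases hz : z ∈ Ioo ak akm1
    · exact hψρ z hz
    · exact (hψ_supp z hz).trans_le (by positivity)
  exact (stmt9_general (Nat.cast_pos.2 hk) hψ_nonneg (.of_integral_ne_zero (by simp [hψ_int]))
    hψ_int.le (hρ_mono.mono Ioi_subset_Ici_self) hρ_pos hψρ' hf_nonneg hf_int
    (fun x hx => (hg_meas x hx).aemeasurable) hg_mono hg_lip hn hx hy hxy
    (abs_sub_le_of_nonneg_of_le hx.1 hx.2 hy.1 hy.2)).2
end

section
/- Let (U, 𝒜, μ) be a measure space, let M > 0 and m ≥ 1 be real numbers, let ρ : [0,∞) → [0,∞) be non-decreasing with ∫_{(ε,1]} ρ(z)^{−2} dz → ∞ as ε ↓ 0, and let g : [0,M] × U → [0,∞) be such that u ↦ g(x,u) is measurable for every x ∈ [0,M], x ↦ g(x,u) is non-decreasing for every u ∈ U, ∫_U min(g(M,u), g(M,u)²) μ(du) < ∞, and ∫_U min(|g(x,u) − g(y,u)|, (g(x,u) − g(y,u))²) μ(du) ≤ ρ(|x − y|)² for all x, y ∈ [0,M]. Then the function β : [0,M] → ℝ defined by β(x) = ∫_U ( g(x,u) − min(g(x,u),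 m) ) μ(du) is well defined (finite), non-decreasing and continuous on [0,M]. -/
open MeasureTheory Set Filter

/-!
Write `ψ a = min |a| (a ^ 2)`, so that `|a| = max (ψ a) (√(ψ a))`. The excess `a - min a m` is
1-Lipschitz in `a` and vanishes for `a ≤ m`; hence the excesses of `a` and `b` differ only when
`|b|` or `|a - b|` is at least `m / 2`, and then `1 ≤ (ψ (a - b) + ψ b) / ψ (m / 2)`. Therefore
they differ by at most `ψ (a - b) + √(ψ (a - b)) * √((ψ (a - b) + ψ b) / ψ (m / 2))`, and by
Cauchy–Schwarz the same estimate holds with every `ψ` of a function replaced by its integral. For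
`a = g x u`, `b = g y u` this is a modulus of continuity of `β`, because `∫ ψ (g x - g y)` is at
most `ρ |x - y| ^ 2` and a monotone `ρ` with `ρ⁻²` not integrable at `0` tends to `0` there.
-/

open scoped Topology

/-- The gauge `a ↦ min |a| (a ^ 2)`, which measures small values quadratically and large values
linearly. The absolute value makes it even, so that it applies to signed increments. -/
noncomputable def minAbsSq (a : ℝ) : ℝ :=
  min |a| (a ^ 2)

section Gauge

variable {a b m : ℝ}

lemma minAbsSq_of_nonneg (ha : 0 ≤ a) : minAbsSq a = min a (a ^ 2) := by
  rw [minAbsSq, abs_of_nonneg ha]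

lemma minAbsSq_zero : minAbsSq 0 = 0 := by
  simp [minAbsSq]

lemma minAbsSq_nonneg (a : ℝ) : 0 ≤ minAbsSq a :=
  le_min (abs_nonneg a) (sq_nonneg a)

lemma minAbsSq_pos (ha : a ≠ 0) : 0 < minAbsSq a :=
  lt_min (abs_pos.2 ha) (sq_pos_of_ne_zero ha)

lemma minAbsSq_le_minAbsSq (h : |a| ≤ |b|) : minAbsSq a ≤ minAbsSq b :=
  min_le_min h (sq_le_sq.2 h)

lemma minAbsSq_two_mul_le (a : ℝ) : minAbsSq (2 * a) ≤ 4 * minAbsSq a := by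
  rw [minAbsSq, minAbsSq, mul_min_of_nonneg _ _ zero_le_four, abs_mul, abs_two]
  gcongr
  · norm_num
  · linarith [mul_pow 2 a 2]

lemma minAbsSq_sub_le (a b : ℝ) : minAbsSq (a - b) ≤ 4 * (minAbsSq a + minAbsSq b) := by
  have hmax : |a - b| ≤ |2 * a| ∨ |a - b| ≤ |2 * b| := by grind
  rcases hmax with h | h
  · linarith [minAbsSq_le_minAbsSq h, minAbsSq_two_mul_le a, minAbsSq_nonneg b]
  · linarith [minAbsSq_le_minAbsSq h, minAbsSq_two_mul_le b, minAbsSq_nonneg a]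

lemma continuous_minAbsSq : Continuous minAbsSq :=
  continuous_abs.min (continuous_pow 2)

lemma abs_le_minAbsSq_add_sqrt (a : ℝ) : |a| ≤ minAbsSq a + √(minAbsSq a) := by
  rcases min_choice |a| (a ^ 2) with h | h
  · exact (le_of_eq h.symm).trans (le_add_of_nonneg_right (Real.sqrt_nonneg _))
  · calc |a| = √(minAbsSq a) := by rw [minAbsSq, h, Real.sqrt_sq_eq_abs]
      _ ≤ _ := le_add_of_nonneg_left (minAbsSq_nonneg a)

lemma minAbsSq_half_le_add (hm : 0 ≤ m) (h : m ≤ max a b) :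
    minAbsSq (m / 2) ≤ minAbsSq (a - b) + minAbsSq b := by
  have hhalf : |m / 2| = m / 2 := abs_of_nonneg (by positivity)
  have hlarge : m / 2 ≤ |a - b| ∨ m / 2 ≤ |b| := by grind
  rcases hlarge with hab | hb
  · exact le_add_of_le_of_nonneg (minAbsSq_le_minAbsSq (hhalf.trans_le hab)) (minAbsSq_nonneg b)
  · exact le_add_of_nonneg_of_le (minAbsSq_nonneg _) (minAbsSq_le_minAbsSq (hhalf.trans_le hb))

lemma monotone_sub_min (m : ℝ) : Monotone fun a : ℝ => a - min a m := by
  intro a b hab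
  grind

lemma abs_sub_min_sub_le_abs_sub (a b m : ℝ) :
    |(a - min a m) - (b - min b m)| ≤ |a - b| := by
  grind

lemma abs_sub_min_sub_le_minAbsSq (hm : 0 < m) (a b : ℝ) :
    |(a - min a m) - (b - min b m)| ≤ minAbsSq (a - b) +
      √(minAbsSq (a - b)) * √((minAbsSq (a - b) + minAbsSq b) / minAbsSq (m / 2)) := by
  have hψ := minAbsSq_nonneg (a - b)
  rcases le_total (max a b) m with h | h
  · rw [min_eq_left (le_of_max_le_left h), min_eq_left (le_of_max_le_right h)]
    simp only [sub_self, abs_zero]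
    positivity
  · have hone : 1 ≤ √((minAbsSq (a - b) + minAbsSq b) / minAbsSq (m / 2)) :=
      Real.one_le_sqrt.2 <|
        (one_le_div (minAbsSq_pos (half_pos hm).ne')).2 (minAbsSq_half_le_add hm.le h)
    calc |(a - min a m) - (b - min b m)|
        ≤ |a - b| := abs_sub_min_sub_le_abs_sub a b m
      _ ≤ minAbsSq (a - b) + √(minAbsSq (a - b)) := abs_le_minAbsSq_add_sqrt _
      _ ≤ _ := by
        gcongr
        exact le_mul_of_one_le_right (Real.sqrt_nonneg _) hone

end Gauge

section Integral

variable {U : Type*} [MeasurableSpace U] {μ : Measure U} {f g : U → ℝ} {m : ℝ}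

lemma memLp_two_sqrt (hf : Integrable f μ) (hf0 : 0 ≤ f) :
    MemLp (fun u => √(f u)) 2 μ := by
  refine (memLp_two_iff_integrable_sq
    (Real.continuous_sqrt.comp_aestronglyMeasurable hf.aestronglyMeasurable)).2 ?_
  simpa only [Real.sq_sqrt (hf0 _)] using hf

lemma integrable_sqrt_mul_sqrt (hf : Integrable f μ) (hf0 : 0 ≤ f) (hg : Integrable g μ)
    (hg0 : 0 ≤ g) : Integrable (fun u => √(f u) * √(g u)) μ :=
  (memLp_two_sqrt hf hf0).integrable_mul (memLp_two_sqrt hg hg0)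

lemma integral_sqrt_mul_sqrt_le (hf : Integrable f μ) (hf0 : 0 ≤ f) (hg : Integrable g μ)
    (hg0 : 0 ≤ g) :
    ∫ u, √(f u) * √(g u) ∂μ ≤ √(∫ u, f u ∂μ) * √(∫ u, g u ∂μ) := by
  have holder := integral_mul_le_Lp_mul_Lq_of_nonneg (μ := μ) Real.HolderConjugate.two_two
    (ae_of_all _ fun u => Real.sqrt_nonneg (f u)) (ae_of_all _ fun u => Real.sqrt_nonneg (g u))
    (by simpa using memLp_two_sqrt hf hf0) (by simpa using memLp_two_sqrt hg hg0)
  simpa only [Real.rpow_two, Real.sq_sqrt (hf0 _), Real.sq_sqrt (hg0 _), ← Real.sqrt_eq_rpow]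
    using holder

lemma integrable_minAbsSq_of_nonneg_of_le (hf : AEStronglyMeasurable f μ) (hf0 : 0 ≤ᵐ[μ] f)
    (hfg : f ≤ᵐ[μ] g) (hg : Integrable (fun u => min (g u) ((g u) ^ 2)) μ) :
    Integrable (fun u => minAbsSq (f u)) μ := by
  refine hg.mono' (continuous_minAbsSq.comp_aestronglyMeasurable hf) ?_
  filter_upwards [hf0, hfg] with u hu0 hu
  rw [Real.norm_of_nonneg (minAbsSq_nonneg _), ← minAbsSq_of_nonneg (hu0.trans hu)]
  exact minAbsSq_le_minAbsSq (abs_le_abs_of_nonneg hu0 hu)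

lemma integrable_minAbsSq_sub (hf : AEStronglyMeasurable f μ) (hg : AEStronglyMeasurable g μ)
    (hfψ : Integrable (fun u => minAbsSq (f u)) μ) (hgψ : Integrable (fun u => minAbsSq (g u)) μ) :
    Integrable (fun u => minAbsSq (f u - g u)) μ := by
  refine ((hfψ.add hgψ).const_mul 4).mono'
    (continuous_minAbsSq.comp_aestronglyMeasurable (hf.sub hg)) (ae_of_all _ fun u => ?_)
  rw [Real.norm_of_nonneg (minAbsSq_nonneg _)]
  exact minAbsSq_sub_le _ _

lemma integrable_sub_min (hm : 0 < m) (hf : AEStronglyMeasurable f μ)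
    (hfψ : Integrable (fun u => minAbsSq (f u)) μ) :
    Integrable (fun u => f u - min (f u) m) μ := by
  refine (hfψ.add (integrable_sqrt_mul_sqrt hfψ (fun u => minAbsSq_nonneg _)
    (hfψ.div_const (minAbsSq (m / 2)))
    fun u => div_nonneg (minAbsSq_nonneg _) (minAbsSq_nonneg _))).mono'
    (hf.sub (hf.inf aestronglyMeasurable_const)) (ae_of_all _ fun u => ?_)
  simpa [minAbsSq_zero, min_eq_left hm.le] using abs_sub_min_sub_le_minAbsSq hm (f u) 0

lemma abs_integral_sub_min_sub_le (hm : 0 < m) (hf : AEStronglyMeasurable f μ)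
    (hg : AEStronglyMeasurable g μ) (hfψ : Integrable (fun u => minAbsSq (f u)) μ)
    (hgψ : Integrable (fun u => minAbsSq (g u)) μ) :
    |(∫ u, (f u - min (f u) m) ∂μ) - ∫ u, (g u - min (g u) m) ∂μ| ≤
      (∫ u, minAbsSq (f u - g u) ∂μ) + √(∫ u, minAbsSq (f u - g u) ∂μ) *
        √(((∫ u, minAbsSq (f u - g u) ∂μ) + ∫ u, minAbsSq (g u) ∂μ) / minAbsSq (m / 2)) := by
  have hsub := integrable_minAbsSq_sub hf hg hfψ hgψ
  have hsub0 : 0 ≤ fun u => minAbsSq (f u - g u) := fun u => minAbsSq_nonneg _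
  have hquot : Integrable
      (fun u => (minAbsSq (f u - g u) + minAbsSq (g u)) / minAbsSq (m / 2)) μ :=
    (hsub.add hgψ).div_const _
  have hquot0 : 0 ≤ fun u => (minAbsSq (f u - g u) + minAbsSq (g u)) / minAbsSq (m / 2) :=
    fun u => div_nonneg (add_nonneg (minAbsSq_nonneg _) (minAbsSq_nonneg _)) (minAbsSq_nonneg _)
  have hprod := integrable_sqrt_mul_sqrt hsub hsub0 hquot hquot0
  rw [← integral_sub (integrable_sub_min hm hf hfψ) (integrable_sub_min hm hg hgψ),
    ← Real.norm_eq_abs]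
  calc ‖∫ u, ((f u - min (f u) m) - (g u - min (g u) m)) ∂μ‖
      ≤ ∫ u, (minAbsSq (f u - g u) + √(minAbsSq (f u - g u)) *
          √((minAbsSq (f u - g u) + minAbsSq (g u)) / minAbsSq (m / 2))) ∂μ :=
        norm_integral_le_of_norm_le (hsub.fun_add hprod)
          (ae_of_all _ fun u => abs_sub_min_sub_le_minAbsSq hm (f u) (g u))
    _ = (∫ u, minAbsSq (f u - g u) ∂μ) + ∫ u, √(minAbsSq (f u - g u)) *
          √((minAbsSq (f u - g u) + minAbsSq (g u)) / minAbsSq (m / 2)) ∂μ :=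
        integral_add hsub hprod
    _ ≤ _ := by
        rw [← integral_add hsub hgψ, ← integral_div]
        gcongr
        exact integral_sqrt_mul_sqrt_le hsub hsub0 hquot hquot0

theorem tendsto_integral_sub_min {ι : Type*} {l : Filter ι} {F : ι → U → ℝ} (hm : 0 < m)
    (hF : ∀ᶠ i in l, AEStronglyMeasurable (F i) μ) (hg : AEStronglyMeasurable g μ)
    (hFψ : ∀ᶠ i in l, Integrable (fun u => minAbsSq (F i u)) μ)
    (hgψ : Integrable (fun u => minAbsSq (g u)) μ)
    (hlim : Tendsto (fun i => ∫ u, minAbsSq (F i u - g u) ∂μ) l (𝓝 0)) :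
    Tendsto (fun i => ∫ u, (F i u - min (F i u) m) ∂μ) l (𝓝 (∫ u, (g u - min (g u) m) ∂μ)) := by
  let bound (δ : ℝ) : ℝ := δ + √δ * √((δ + ∫ u, minAbsSq (g u) ∂μ) / minAbsSq (m / 2))
  have hbound : Tendsto bound (𝓝 0) (𝓝 0) :=
    (show Continuous bound by fun_prop).tendsto' 0 0 (by simp [bound])
  refine tendsto_iff_norm_sub_tendsto_zero.2
    (squeeze_zero' (.of_forall fun i => norm_nonneg _) ?_ (hbound.comp hlim))
  filter_upwards [hF, hFψ] with i hi hiψ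
  exact abs_integral_sub_min_sub_le hm hi hg hiψ hgψ

end Integral

section Osgood

variable {ρ : ℝ → ℝ} {b : ℝ}

lemma exists_pos_lt_of_tendsto_integral_inv_sq
    (hdiv : Tendsto (fun ε : ℝ => ∫ z in Ioc ε b, ((ρ z) ^ 2)⁻¹) (𝓝[>] 0) atTop)
    {c : ℝ} (hc : 0 < c) : ∃ z, 0 < z ∧ ρ z < c := by
  by_contra! hρ
  obtain ⟨ε, hlarge, hε⟩ :=
    ((hdiv.eventually_gt_atTop ((c ^ 2)⁻¹ * |b|)).and self_mem_nhdsWithin).exists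
  have hε_pos : 0 < ε := hε
  refine hlarge.not_ge ?_
  calc ∫ z in Ioc ε b, ((ρ z) ^ 2)⁻¹
      ≤ (c ^ 2)⁻¹ * volume.real (Ioc ε b) := by
        refine (Real.le_norm_self _).trans
          (norm_setIntegral_le_of_norm_le_const measure_Ioc_lt_top fun z hz => ?_)
        rw [Real.norm_of_nonneg (by positivity)]
        gcongr
        exact hρ z (hε_pos.trans hz.1)
    _ ≤ (c ^ 2)⁻¹ * |b| := by
        rw [Real.volume_real_Ioc]
        gcongr
        exact max_le (by linarith [le_abs_self b]) (abs_nonneg b)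

lemma tendsto_zero_of_tendsto_integral_inv_sq (hρ_nonneg : ∀ z, 0 ≤ z → 0 ≤ ρ z)
    (hρ_mono : MonotoneOn ρ (Ici 0))
    (hdiv : Tendsto (fun ε : ℝ => ∫ z in Ioc ε b, ((ρ z) ^ 2)⁻¹) (𝓝[>] 0) atTop) :
    Tendsto ρ (𝓝[≥] 0) (𝓝 0) := by
  refine tendsto_order.2 ⟨fun c hc => ?_, fun c hc => ?_⟩
  · filter_upwards [self_mem_nhdsWithin] with z hz
    exact hc.trans_le (hρ_nonneg z hz)
  · obtain ⟨z, hz, hρz⟩ := exists_pos_lt_of_tendsto_integral_inv_sq hdiv hc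
    filter_upwards [Ico_mem_nhdsGE hz] with w hw
    exact (hρ_mono hw.1 hz.le hw.2.le).trans_lt hρz

end Osgood

theorem stmt15_general {X U : Type*} [PseudoMetricSpace X] [Preorder X] [MeasurableSpace U]
    {μ : Measure U} {s : Set X} {m : ℝ} (hm : 0 < m) {ρ : ℝ → ℝ}
    (hρ : Tendsto ρ (𝓝[≥] 0) (𝓝 0)) {g : X → U → ℝ}
    (hg_meas : ∀ x ∈ s, AEStronglyMeasurable (g x) μ)
    (hg_mono : ∀ x ∈ s, ∀ y ∈ s, x ≤ y → g x ≤ᵐ[μ] g y)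
    (hg_int : ∀ x ∈ s, Integrable (fun u => minAbsSq (g x u)) μ)
    (hg_bound : ∀ x ∈ s, ∀ y ∈ s, ∫ u, minAbsSq (g x u - g y u) ∂μ ≤ (ρ (dist x y)) ^ 2) :
    (∀ x ∈ s, Integrable (fun u => g x u - min (g x u) m) μ) ∧
    MonotoneOn (fun x => ∫ u, (g x u - min (g x u) m) ∂μ) s ∧
    ContinuousOn (fun x => ∫ u, (g x u - min (g x u) m) ∂μ) s := by
  have hint (x) (hx : x ∈ s) := integrable_sub_min hm (hg_meas x hx) (hg_int x hx)
  refine ⟨hint, fun x hx y hy hxy => ?_, fun y hy => ?_⟩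
  · exact integral_mono_ae (hint x hx) (hint y hy)
      ((hg_mono x hx y hy hxy).mono fun u hu => monotone_sub_min m hu)
  · have hdist : Tendsto (fun x => dist x y) (𝓝[s] y) (𝓝[≥] 0) :=
      tendsto_nhdsWithin_iff.2 ⟨((continuous_id.dist continuous_const).tendsto' y 0
        (dist_self y)).mono_left nhdsWithin_le_nhds, .of_forall fun x => dist_nonneg⟩
    have hρ_sq : Tendsto (fun x => (ρ (dist x y)) ^ 2) (𝓝[s] y) (𝓝 0) := by
      simpa using (hρ.comp hdist).pow 2
    have hmem : ∀ᶠ x in 𝓝[s] y, x ∈ s := self_mem_nhdsWithin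
    exact tendsto_integral_sub_min hm (hmem.mono hg_meas) (hg_meas y hy) (hmem.mono hg_int)
      (hg_int y hy) (squeeze_zero' (.of_forall fun x => integral_nonneg fun u => minAbsSq_nonneg _)
        (hmem.mono fun x hx => hg_bound x hx y hy) hρ_sq)

/-- The compensating drift `β(x) = ∫_U (g(x,u) - g(x,u) ∧ m) μ(du)` arising from
truncating the jumps at level `m` is well defined (finite), non-decreasing and
continuous on `[0,M]`. -/
theorem stmt15 {U : Type*} [MeasurableSpace U] (μ : Measure U)
    (M m : ℝ) (hM : 0 < M) (hm : 1 ≤ m)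
    (ρ : ℝ → ℝ) (hρ_nonneg : ∀ z, 0 ≤ z → 0 ≤ ρ z)
    (hρ_mono : MonotoneOn ρ (Ici 0))
    (hdiv : Tendsto (fun ε : ℝ => ∫ z in Ioc ε 1, ((ρ z) ^ 2)⁻¹)
      (nhdsWithin 0 (Ioi 0)) atTop)
    (g : ℝ → U → ℝ)
    (hg_meas : ∀ x ∈ Icc (0:ℝ) M, Measurable (g x))
    (hg_nonneg : ∀ x ∈ Icc (0:ℝ) M, ∀ u, 0 ≤ g x u)
    (hg_mono : ∀ u : U, ∀ x ∈ Icc (0:ℝ) M, ∀ y ∈ Icc (0:ℝ) M, x ≤ y → g x u ≤ g y u)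
    (hg_int : Integrable (fun u => min (g M u) ((g M u) ^ 2)) μ)
    (hg_bound : ∀ x ∈ Icc (0:ℝ) M, ∀ y ∈ Icc (0:ℝ) M,
      ∫ u, min |g x u - g y u| ((g x u - g y u) ^ 2) ∂μ ≤ (ρ |x - y|) ^ 2) :
    (∀ x ∈ Icc (0:ℝ) M, Integrable (fun u => g x u - min (g x u) m) μ) ∧
    MonotoneOn (fun x => ∫ u, (g x u - min (g x u) m) ∂μ) (Icc (0:ℝ) M) ∧
    ContinuousOn (fun x => ∫ u, (g x u - min (g x u) m) ∂μ) (Icc (0:ℝ) M) := by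
  exact stmt15_general (one_pos.trans_le hm)
    (tendsto_zero_of_tendsto_integral_inv_sq hρ_nonneg hρ_mono hdiv)
    (fun x hx => (hg_meas x hx).aestronglyMeasurable)
    (fun x hx y hy hxy => ae_of_all _ fun u => hg_mono u x hx y hy hxy)
    (fun x hx => integrable_minAbsSq_of_nonneg_of_le (hg_meas x hx).aestronglyMeasurable
      (ae_of_all _ (hg_nonneg x hx))
      (ae_of_all _ fun u => hg_mono u x hx M (right_mem_Icc.2 hM.le) hx.2) hg_int)
    hg_bound
end
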